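/- arXiv:math/0408258 — 2 statements merged into one kernel-verified Lean document; each statement's English description precedes it below -/
import Mathlib

section
/- Let T = ⊕_{m≥0} T^m be a graded bialgebra over a commutative ring R with a left-handed coassociative algebra comultiplication Δ such that T^1 generates T_+ = ⊕_{m≥1} T^m, and let ρ = (π ⊗ π) ∘ Δ|_{T^1} be the induced pre-Lie comultiplication on T^1, where π : T → T^1 is the projection. Let (U, Θ) be a left comodule over (T, Δ), i.e. Θ : U → T ⊗ U is R-linear with (Δ ⊗ id_U)Θ = (id_T ⊗ Θ)Θ and Θ(u) − 1⊗u ∈ T_+ ⊗ U for all u ∈ U. Then θ := (π ⊗ id_U) ∘ Θ : U → T^1 ⊗ U makes (U, θ) a comodule over the pre-Lie coalgebra (T^1, ρ), i.e. θ̃ := (id ⊗ θ)θ − (ρ ⊗ id)θ satisfies P^{1,2} θ̃ = θ̃. -/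
open scoped TensorProduct

/-- `θ̃ = (id_A ⊗ θ)θ − (ρ ⊗ id_U)θ : U → A ⊗ A ⊗ U`. -/
noncomputable def tildeComod {R A U : Type*} [CommRing R] [AddCommGroup A] [Module R A]
    [AddCommGroup U] [Module R U] (ρ : A →ₗ[R] A ⊗[R] A) (θ : U →ₗ[R] A ⊗[R] U) :
    U →ₗ[R] A ⊗[R] (A ⊗[R] U) :=
  LinearMap.lTensor A θ ∘ₗ θ -
    (TensorProduct.assoc R A A U).toLinearMap ∘ₗ LinearMap.rTensor U ρ ∘ₗ θ

/-!
Let `P` be `T_+` and `F = (π ⊗ π) ∘ Δ`. Coassociativity of `Θ` gives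
`θ̃ = (F ∘ (id - π) ⊗ id_U) ∘ Θ`, so it suffices that `F ∘ (id - π)` takes symmetric values on
`1` and on `P`. It vanishes on `1` and on `T^1`, and `P = T^1 + P²` because `T^1` generates `P`.
Finally, the reduced coproduct maps `P` to `P ⊗ P`, and for `x, y ∈ P` it sends `x * y` to
`x ⊗ y + y ⊗ x` modulo `P² ⊗ P + P ⊗ P²`, which `π ⊗ π` annihilates.
-/

open TensorProduct (mapIncl)

section RangeMapIncl

variable {R : Type*} [CommRing R]

theorem tmul_mem_range_mapIncl {M N : Type*} [AddCommGroup M] [Module R M] [AddCommGroup N]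
    [Module R N] {P : Submodule R M} {Q : Submodule R N} {x : M} {y : N} (hx : x ∈ P)
    (hy : y ∈ Q) : x ⊗ₜ[R] y ∈ LinearMap.range (mapIncl P Q) :=
  ⟨⟨x, hx⟩ ⊗ₜ ⟨y, hy⟩, rfl⟩

theorem range_mapIncl_le_ker_map {M N M' N' : Type*} [AddCommGroup M] [Module R M]
    [AddCommGroup N] [Module R N] [AddCommGroup M'] [Module R M'] [AddCommGroup N'] [Module R N']
    {P : Submodule R M} {Q : Submodule R N} {f : M →ₗ[R] M'} {g : N →ₗ[R] N'}
    (h : P ≤ LinearMap.ker f ∨ Q ≤ LinearMap.ker g) :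
    LinearMap.range (mapIncl P Q) ≤ LinearMap.ker (TensorProduct.map f g) := by
  rw [TensorProduct.range_mapIncl, Submodule.map₂_le]
  intro x hx y hy
  rcases h with hf | hg
  · simp [LinearMap.mem_ker.1 (hf hx)]
  · simp [LinearMap.mem_ker.1 (hg hy)]

theorem mul_mem_range_mapIncl {S T : Type*} [Ring S] [Algebra R S] [Ring T] [Algebra R T]
    {P P' P'' : Submodule R S} {Q Q' Q'' : Submodule R T} {s t : S ⊗[R] T}
    (hs : s ∈ LinearMap.range (mapIncl P Q)) (ht : t ∈ LinearMap.range (mapIncl P' Q'))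
    (hP : P * P' ≤ P'') (hQ : Q * Q' ≤ Q'') :
    s * t ∈ LinearMap.range (mapIncl P'' Q'') := by
  rw [TensorProduct.range_map_eq_span_tmul] at hs ht
  suffices h : Submodule.span R {s | ∃ x y, P.subtype x ⊗ₜ[R] Q.subtype y = s} *
      Submodule.span R {t | ∃ x y, P'.subtype x ⊗ₜ[R] Q'.subtype y = t} ≤
      LinearMap.range (mapIncl P'' Q'') from h (Submodule.mul_mem_mul hs ht)
  rw [Submodule.span_mul_span, Submodule.span_le]
  rintro _ ⟨_, ⟨x, y, rfl⟩, _, ⟨x', y', rfl⟩, rfl⟩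
  beta_reduce
  rw [Algebra.TensorProduct.tmul_mul_tmul]
  exact tmul_mem_range_mapIncl (hP (Submodule.mul_mem_mul x.2 x'.2))
    (hQ (Submodule.mul_mem_mul y.2 y'.2))

end RangeMapIncl

section ReducedComul

variable {R T A : Type*} [CommRing R] [Ring T] [Algebra R T] [AddCommGroup A] [Module R A]
  (Δ : T →ₐ[R] T ⊗[R] T)

/-- The reduced coproduct `x ↦ Δ x - x ⊗ 1 - 1 ⊗ x`, the part of `Δ` that is compared with
`T_+ ⊗ T_+`. It is defined on all of `T`, although the usual notion lives on `T_+`: here `1` is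
sent to `-(1 ⊗ 1)`. -/
noncomputable def reducedComul : T →ₗ[R] T ⊗[R] T :=
  Δ.toLinearMap - (TensorProduct.mk R T T).flip 1 - TensorProduct.mk R T T 1

theorem reducedComul_apply (x : T) : reducedComul Δ x = Δ x - x ⊗ₜ 1 - 1 ⊗ₜ x := rfl

theorem reducedComul_mul (x y : T) :
    reducedComul Δ (x * y) = x ⊗ₜ y + y ⊗ₜ x +
      (x ⊗ₜ 1 * reducedComul Δ y + 1 ⊗ₜ x * reducedComul Δ y + reducedComul Δ x * y ⊗ₜ 1 +
        reducedComul Δ x * 1 ⊗ₜ y + reducedComul Δ x * reducedComul Δ y) := by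
  simp only [reducedComul_apply, map_mul, mul_sub, sub_mul,
    Algebra.TensorProduct.tmul_mul_tmul, mul_one, one_mul]
  abel

variable {Δ} {P : Submodule R T}

theorem reducedComul_mul_sub_mem (hP : P * P ≤ P) {x y : T} (hx : x ∈ P) (hy : y ∈ P)
    (hΔx : reducedComul Δ x ∈ LinearMap.range (mapIncl P P))
    (hΔy : reducedComul Δ y ∈ LinearMap.range (mapIncl P P)) :
    reducedComul Δ (x * y) - (x ⊗ₜ y + y ⊗ₜ x) ∈
      LinearMap.range (mapIncl (P * P) P) ⊔ LinearMap.range (mapIncl P (P * P)) := by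
  have left_mem {z : T} (hz : z ∈ P) : z ⊗ₜ 1 ∈ LinearMap.range (mapIncl P (1 : Submodule R T)) :=
    tmul_mem_range_mapIncl hz (Submodule.one_le.1 le_rfl)
  have right_mem {z : T} (hz : z ∈ P) : 1 ⊗ₜ z ∈ LinearMap.range (mapIncl (1 : Submodule R T) P) :=
    tmul_mem_range_mapIncl (Submodule.one_le.1 le_rfl) hz
  rw [reducedComul_mul, add_sub_cancel_left]
  refine add_mem (add_mem (add_mem (add_mem ?_ ?_) ?_) ?_) ?_
  · exact Submodule.mem_sup_left (mul_mem_range_mapIncl (left_mem hx) hΔy le_rfl (one_mul P).le)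
  · exact Submodule.mem_sup_right (mul_mem_range_mapIncl (right_mem hx) hΔy (one_mul P).le le_rfl)
  · exact Submodule.mem_sup_left (mul_mem_range_mapIncl hΔx (left_mem hy) le_rfl (mul_one P).le)
  · exact Submodule.mem_sup_right (mul_mem_range_mapIncl hΔx (right_mem hy) (mul_one P).le le_rfl)
  · exact Submodule.mem_sup_left (mul_mem_range_mapIncl hΔx hΔy le_rfl hP)

theorem reducedComul_mul_mem (hP : P * P ≤ P) {x y : T} (hx : x ∈ P) (hy : y ∈ P)
    (hΔx : reducedComul Δ x ∈ LinearMap.range (mapIncl P P))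
    (hΔy : reducedComul Δ y ∈ LinearMap.range (mapIncl P P)) :
    reducedComul Δ (x * y) ∈ LinearMap.range (mapIncl P P) := by
  have higher_le : LinearMap.range (mapIncl (P * P) P) ⊔ LinearMap.range (mapIncl P (P * P)) ≤
      LinearMap.range (mapIncl P P) :=
    sup_le (TensorProduct.range_mapIncl_mono hP le_rfl)
      (TensorProduct.range_mapIncl_mono le_rfl hP)
  exact (Submodule.sub_mem_iff_left _
    (add_mem (tmul_mem_range_mapIncl hx hy) (tmul_mem_range_mapIncl hy hx))).1
    (higher_le (reducedComul_mul_sub_mem hP hx hy hΔx hΔy))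

variable {π : T →ₗ[R] A}

theorem map_comul_mul (hπ_one : π 1 = 0) (hP : P * P ≤ P) (hπP : P * P ≤ LinearMap.ker π)
    {x y : T} (hx : x ∈ P) (hy : y ∈ P)
    (hΔx : reducedComul Δ x ∈ LinearMap.range (mapIncl P P))
    (hΔy : reducedComul Δ y ∈ LinearMap.range (mapIncl P P)) :
    TensorProduct.map π π (Δ (x * y)) = π x ⊗ₜ π y + π y ⊗ₜ π x := by
  have higher_le_ker :
      LinearMap.range (mapIncl (P * P) P) ⊔ LinearMap.range (mapIncl P (P * P)) ≤
        LinearMap.ker (TensorProduct.map π π) :=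
    sup_le (range_mapIncl_le_ker_map (.inl hπP)) (range_mapIncl_le_ker_map (.inr hπP))
  simpa [reducedComul_apply, hπ_one, sub_eq_zero] using
    higher_le_ker (reducedComul_mul_sub_mem hP hx hy hΔx hΔy)

theorem comm_map_comul_eq_self_of_mem_mul (hπ_one : π 1 = 0) (hP : P * P ≤ P)
    (hπP : P * P ≤ LinearMap.ker π)
    (hΔ : ∀ x ∈ P, reducedComul Δ x ∈ LinearMap.range (mapIncl P P)) {z : T} (hz : z ∈ P * P) :
    TensorProduct.comm R A A (TensorProduct.map π π (Δ z)) = TensorProduct.map π π (Δ z) := by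
  refine Submodule.mul_induction_on hz (fun x hx y hy ↦ ?_) fun x y hx hy ↦ ?_
  · rw [map_comul_mul hπ_one hP hπP hx hy (hΔ x hx) (hΔ y hy), map_add,
      TensorProduct.comm_tmul, TensorProduct.comm_tmul, add_comm]
  · simp only [map_add, hx, hy]

end ReducedComul

section Adjoin

variable {R T : Type*} [CommRing R] [Ring T] [Algebra R T]

theorem toSubmodule_mul_self_le (P : NonUnitalSubalgebra R T) :
    P.toSubmodule * P.toSubmodule ≤ P.toSubmodule :=
  Submodule.mul_le.2 fun _ hx _ hy ↦ P.mul_mem hx hy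

theorem adjoin_le_sup_mul_self (V : Submodule R T) :
    (NonUnitalAlgebra.adjoin R (V : Set T)).toSubmodule ≤
      V ⊔ (NonUnitalAlgebra.adjoin R (V : Set T)).toSubmodule *
        (NonUnitalAlgebra.adjoin R (V : Set T)).toSubmodule := by
  intro x hx
  induction hx using NonUnitalAlgebra.adjoin_induction with
  | mem x hx => exact Submodule.mem_sup_left hx
  | add x y _ _ hx hy => exact add_mem hx hy
  | zero => exact zero_mem _
  | mul x y hx hy _ _ => exact Submodule.mem_sup_right (Submodule.mul_mem_mul hx hy)
  | smul r x _ hx => exact Submodule.smul_mem _ r hx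

theorem reducedComul_mem_of_mem_adjoin {Δ : T →ₐ[R] T ⊗[R] T} {s : Set T} {P : Submodule R T}
    (hP : P = (NonUnitalAlgebra.adjoin R s).toSubmodule)
    (hs : ∀ a ∈ s, reducedComul Δ a ∈ LinearMap.range (mapIncl P P)) {x : T} (hx : x ∈ P) :
    reducedComul Δ x ∈ LinearMap.range (mapIncl P P) := by
  have hPP : P * P ≤ P := hP ▸ toSubmodule_mul_self_le _
  rw [hP] at hx
  induction hx using NonUnitalAlgebra.adjoin_induction with
  | mem x hx => exact hs x hx
  | add x y _ _ hx hy => rw [map_add]; exact add_mem hx hy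
  | zero => rw [map_zero]; exact zero_mem _
  | mul x y hx hy hΔx hΔy =>
    exact reducedComul_mul_mem hPP (hP.ge hx) (hP.ge hy) hΔx hΔy
  | smul r x _ hx => rw [map_smul]; exact Submodule.smul_mem _ r hx

theorem comm_map_comul_sub_proj_eq_self {Δ : T →ₐ[R] T ⊗[R] T} {V P : Submodule R T}
    {π : T →ₗ[R] V} (hπV : ∀ v : V, π v = v) (hπ_one : π 1 = 0)
    (hP : P = (NonUnitalAlgebra.adjoin R (V : Set T)).toSubmodule)
    (hπP : P * P ≤ LinearMap.ker π)
    (hΔ : ∀ v : V, reducedComul Δ v ∈ LinearMap.range (mapIncl P P)) {x : T} (hx : x ∈ P) :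
    TensorProduct.comm R V V (TensorProduct.map π π (Δ (x - π x))) =
      TensorProduct.map π π (Δ (x - π x)) := by
  have hPP : P * P ≤ P := hP ▸ toSubmodule_mul_self_le _
  have hx_sup : x ∈ V ⊔ P * P := by subst hP; exact adjoin_le_sup_mul_self V hx
  obtain ⟨v, hv, z, hz, rfl⟩ := Submodule.mem_sup.1 hx_sup
  have hsub : v + z - π (v + z) = z := by
    rw [map_add, LinearMap.mem_ker.1 (hπP hz), add_zero, hπV ⟨v, hv⟩, add_sub_cancel_left]
  rw [hsub]
  exact comm_map_comul_eq_self_of_mem_mul hπ_one hPP hπP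
    (fun _ ↦ reducedComul_mem_of_mem_adjoin hP fun a ha ↦ hΔ ⟨a, ha⟩) hz

end Adjoin

section Comodule

variable {R T U A : Type*} [CommRing R] [AddCommGroup T] [Module R T] [AddCommGroup U]
  [Module R U] [AddCommGroup A] [Module R A]

theorem lTensor_comp_self_of_coassoc {Δ : T →ₗ[R] T ⊗[R] T} {Θ : U →ₗ[R] T ⊗[R] U}
    (hΘcoassoc : (TensorProduct.assoc R T T U).toLinearMap ∘ₗ LinearMap.rTensor U Δ ∘ₗ Θ =
      LinearMap.lTensor T Θ ∘ₗ Θ) (π : T →ₗ[R] A) :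
    LinearMap.lTensor A (LinearMap.rTensor U π ∘ₗ Θ) ∘ₗ LinearMap.rTensor U π ∘ₗ Θ =
      (TensorProduct.assoc R A A U).toLinearMap ∘ₗ
        LinearMap.rTensor U (TensorProduct.map π π ∘ₗ Δ) ∘ₗ Θ :=
  calc
    _ = TensorProduct.map π (LinearMap.rTensor U π) ∘ₗ LinearMap.lTensor T Θ ∘ₗ Θ := by
      rw [← LinearMap.comp_assoc, ← LinearMap.comp_assoc, LinearMap.lTensor_comp_rTensor,
        LinearMap.map_comp_lTensor]
    _ = (TensorProduct.map π (LinearMap.rTensor U π) ∘ₗ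
          (TensorProduct.assoc R T T U).toLinearMap) ∘ₗ LinearMap.rTensor U Δ ∘ₗ Θ := by
      rw [← hΘcoassoc, LinearMap.comp_assoc]
    _ = _ := by
      rw [LinearMap.rTensor, TensorProduct.map_map_comp_assoc_eq, LinearMap.rTensor_comp]
      rfl

theorem tildeComod_eq_assoc_comp_rTensor {Δ : T →ₗ[R] T ⊗[R] T} {Θ : U →ₗ[R] T ⊗[R] U}
    (hΘcoassoc : (TensorProduct.assoc R T T U).toLinearMap ∘ₗ LinearMap.rTensor U Δ ∘ₗ Θ =
      LinearMap.lTensor T Θ ∘ₗ Θ) (π : T →ₗ[R] A) (ι : A →ₗ[R] T) :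
    tildeComod (TensorProduct.map π π ∘ₗ Δ ∘ₗ ι) (LinearMap.rTensor U π ∘ₗ Θ) =
      (TensorProduct.assoc R A A U).toLinearMap ∘ₗ
        LinearMap.rTensor U (TensorProduct.map π π ∘ₗ Δ ∘ₗ (LinearMap.id - ι ∘ₗ π)) ∘ₗ Θ := by
  rw [tildeComod, lTensor_comp_self_of_coassoc hΘcoassoc]
  simp only [LinearMap.comp_sub, LinearMap.comp_id, LinearMap.rTensor_sub, LinearMap.sub_comp,
    LinearMap.rTensor_comp, LinearMap.comp_assoc]

theorem leftComm_comp_assoc_comp_rTensor (F : T →ₗ[R] A ⊗[R] A) :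
    (TensorProduct.leftComm R A A U).toLinearMap ∘ₗ
        (TensorProduct.assoc R A A U).toLinearMap ∘ₗ LinearMap.rTensor U F =
      (TensorProduct.assoc R A A U).toLinearMap ∘ₗ
        LinearMap.rTensor U ((TensorProduct.comm R A A).toLinearMap ∘ₗ F) := by
  have leftComm_comp_assoc : (TensorProduct.leftComm R A A U).toLinearMap ∘ₗ
      (TensorProduct.assoc R A A U).toLinearMap =
      (TensorProduct.assoc R A A U).toLinearMap ∘ₗ
        LinearMap.rTensor U (TensorProduct.comm R A A).toLinearMap :=
    TensorProduct.ext_threefold fun _ _ _ ↦ rfl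
  rw [← LinearMap.comp_assoc, leftComm_comp_assoc, LinearMap.comp_assoc, LinearMap.rTensor_comp]

theorem rTensor_comp_eq_of_eqOn {P : Submodule R T} {e : T} {Θ : U →ₗ[R] T ⊗[R] U}
    (hΘ : ∀ u, Θ u - e ⊗ₜ u ∈ LinearMap.range (LinearMap.rTensor U P.subtype))
    {M : Type*} [AddCommMonoid M] [Module R M] {f g : T →ₗ[R] M} (he : f e = g e)
    (hP : Set.EqOn f g P) :
    LinearMap.rTensor U f ∘ₗ Θ = LinearMap.rTensor U g ∘ₗ Θ := by
  ext u
  obtain ⟨t, ht⟩ := hΘ u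
  have hfg : f ∘ₗ P.subtype = g ∘ₗ P.subtype := LinearMap.ext fun p ↦ hP p.2
  rw [LinearMap.comp_apply, LinearMap.comp_apply, ← sub_add_cancel (Θ u) (e ⊗ₜ u), ← ht, map_add,
    map_add, ← LinearMap.rTensor_comp_apply, ← LinearMap.rTensor_comp_apply, hfg,
    LinearMap.rTensor_tmul, LinearMap.rTensor_tmul, he]

end Comodule

section Graded

variable {R T : Type*} [CommRing R] [Ring T] [Algebra R T] (𝒜 : ℕ → Submodule R T)

/-- The part `⊕_{m ≥ n} T^m` of degree at least `n` of a graded algebra; `T_+` is the case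
`n = 1`. -/
def degreeGE (n : ℕ) : Submodule R T := ⨆ m, ⨆ _ : n ≤ m, 𝒜 m

variable {𝒜}

theorem le_degreeGE {m n : ℕ} (h : n ≤ m) : 𝒜 m ≤ degreeGE 𝒜 n :=
  le_iSup₂_of_le m h le_rfl

theorem degreeGE_le_iff {n : ℕ} {P : Submodule R T} :
    degreeGE 𝒜 n ≤ P ↔ ∀ m, n ≤ m → 𝒜 m ≤ P :=
  iSup₂_le_iff

theorem degreeGE_anti {m n : ℕ} (h : m ≤ n) : degreeGE 𝒜 n ≤ degreeGE 𝒜 m :=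
  degreeGE_le_iff.2 fun _ hk ↦ le_degreeGE (h.trans hk)

theorem degreeGE_mul_degreeGE_le [SetLike.GradedMonoid 𝒜] (m n : ℕ) :
    degreeGE 𝒜 m * degreeGE 𝒜 n ≤ degreeGE 𝒜 (m + n) := by
  simp only [degreeGE, Submodule.iSup_mul, Submodule.mul_iSup, iSup_le_iff, Submodule.mul_le]
  intro j hj i hi x hx y hy
  exact le_degreeGE (add_le_add hi hj) (SetLike.mul_mem_graded hx hy)

theorem degreeGE_one_eq_adjoin [SetLike.GradedMonoid 𝒜]
    (hgen : degreeGE 𝒜 1 ≤ (NonUnitalAlgebra.adjoin R (𝒜 1 : Set T)).toSubmodule) :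
    degreeGE 𝒜 1 = (NonUnitalAlgebra.adjoin R (𝒜 1 : Set T)).toSubmodule := by
  refine le_antisymm hgen fun x hx ↦ ?_
  induction hx using NonUnitalAlgebra.adjoin_induction with
  | mem x hx => exact le_degreeGE le_rfl hx
  | add x y _ _ hx hy => exact add_mem hx hy
  | zero => exact zero_mem _
  | mul x y _ _ hx hy =>
    exact degreeGE_anti one_le_two (degreeGE_mul_degreeGE_le 1 1 (Submodule.mul_mem_mul hx hy))
  | smul r x _ hx => exact Submodule.smul_mem _ r hx

theorem degreeGE_one_mul_self_le_ker [GradedAlgebra 𝒜] {π : T →ₗ[R] 𝒜 1}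
    (hπ : ∀ x, π x = DirectSum.decompose 𝒜 x 1) :
    degreeGE 𝒜 1 * degreeGE 𝒜 1 ≤ LinearMap.ker π := by
  refine (degreeGE_mul_degreeGE_le 1 1).trans (degreeGE_le_iff.2 fun m hm x hx ↦ ?_)
  rw [LinearMap.mem_ker, hπ]
  exact Subtype.ext (DirectSum.decompose_of_mem_ne 𝒜 hx (by lia))

end Graded

/-- `V` and `P` play the roles of `T^1` and `T_+`. -/
theorem stmt_6_general {R T U : Type*} [CommRing R] [Ring T] [Algebra R T]
    [AddCommGroup U] [Module R U]
    (V P : Submodule R T) (hP : P = (NonUnitalAlgebra.adjoin R (V : Set T)).toSubmodule)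
    (π : T →ₗ[R] V) (hπV : ∀ v : V, π v = v) (hπ_one : π 1 = 0)
    (hπP : P * P ≤ LinearMap.ker π)
    (Δ : T →ₐ[R] T ⊗[R] T)
    (hΔ : ∀ v : V, Δ (v : T) - (v : T) ⊗ₜ[R] (1 : T) - (1 : T) ⊗ₜ[R] (v : T) ∈
      LinearMap.range (mapIncl P P))
    (ρ : V →ₗ[R] V ⊗[R] V)
    (hρ : ρ = TensorProduct.map π π ∘ₗ Δ.toLinearMap ∘ₗ V.subtype)
    (Θ : U →ₗ[R] T ⊗[R] U)
    (hΘcoassoc :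
      (TensorProduct.assoc R T T U).toLinearMap ∘ₗ
          LinearMap.rTensor U Δ.toLinearMap ∘ₗ Θ =
        LinearMap.lTensor T Θ ∘ₗ Θ)
    (hΘleft : ∀ u : U,
      Θ u - (1 : T) ⊗ₜ[R] u ∈ LinearMap.range (LinearMap.rTensor U P.subtype))
    (θ : U →ₗ[R] V ⊗[R] U) (hθ : θ = LinearMap.rTensor U π ∘ₗ Θ) :
    (TensorProduct.leftComm R V V U).toLinearMap ∘ₗ tildeComod ρ θ = tildeComod ρ θ := by
  subst hρ hθ
  let F := TensorProduct.map π π ∘ₗ Δ.toLinearMap ∘ₗ (LinearMap.id - V.subtype ∘ₗ π)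
  have F_one : F 1 = 0 := by simp [F, hπ_one, Algebra.TensorProduct.one_def]
  have F_symm : Set.EqOn ((TensorProduct.comm R V V).toLinearMap ∘ₗ F) F P :=
    fun _ ↦ comm_map_comul_sub_proj_eq_self hπV hπ_one hP hπP hΔ
  calc
    _ = ((TensorProduct.assoc R V V U).toLinearMap ∘ₗ
          LinearMap.rTensor U ((TensorProduct.comm R V V).toLinearMap ∘ₗ F)) ∘ₗ Θ := by
      rw [tildeComod_eq_assoc_comp_rTensor hΘcoassoc, ← leftComm_comp_assoc_comp_rTensor]
      rfl
    _ = (TensorProduct.assoc R V V U).toLinearMap ∘ₗ LinearMap.rTensor U F ∘ₗ Θ := by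
      rw [LinearMap.comp_assoc, rTensor_comp_eq_of_eqOn hΘleft
        (by rw [LinearMap.comp_apply, F_one, map_zero]) F_symm]
    _ = _ := (tildeComod_eq_assoc_comp_rTensor hΘcoassoc π V.subtype).symm

/-- let `(T = ⊕ T^m, Δ)` be a left-handed graded bialgebra such that `T^1`
generates `T_+`, with leading term `ρ` on `T^1`, and let `(U, Θ)` be a left comodule
over `(T, Δ)`.  Then `θ = (π ⊗ id_U) ∘ Θ` makes `U` a comodule over the pre-Lie
coalgebra `(T^1, ρ)`, i.e. `P^{1,2} θ̃ = θ̃`. -/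
theorem stmt_6 {R T U : Type*} [CommRing R] [Ring T] [Algebra R T]
    [AddCommGroup U] [Module R U]
    (𝒜 : ℕ → Submodule R T) [GradedAlgebra 𝒜]
    (Δ : T →ₐ[R] T ⊗[R] T)
    (hcoassoc :
      (TensorProduct.assoc R T T T).toLinearMap ∘ₗ
          LinearMap.rTensor T Δ.toLinearMap ∘ₗ Δ.toLinearMap =
        LinearMap.lTensor T Δ.toLinearMap ∘ₗ Δ.toLinearMap)
    (Tplus : Submodule R T) (hTplus : Tplus = ⨆ m, ⨆ _ : 1 ≤ m, 𝒜 m)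
    (hleft : ∀ a : ↥(𝒜 1),
      Δ (a : T) - (a : T) ⊗ₜ[R] (1 : T) - (1 : T) ⊗ₜ[R] (a : T) ∈
        LinearMap.range (TensorProduct.map Tplus.subtype (𝒜 1).subtype))
    (hgen : ∀ x ∈ Tplus, x ∈ NonUnitalAlgebra.adjoin R (𝒜 1 : Set T))
    (π : T →ₗ[R] ↥(𝒜 1)) (hπ : ∀ x : T, π x = DirectSum.decompose 𝒜 x 1)
    (ρ : ↥(𝒜 1) →ₗ[R] ↥(𝒜 1) ⊗[R] ↥(𝒜 1))
    (hρ : ρ = TensorProduct.map π π ∘ₗ Δ.toLinearMap ∘ₗ (𝒜 1).subtype)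
    (Θ : U →ₗ[R] T ⊗[R] U)
    (hΘcoassoc :
      (TensorProduct.assoc R T T U).toLinearMap ∘ₗ
          LinearMap.rTensor U Δ.toLinearMap ∘ₗ Θ =
        LinearMap.lTensor T Θ ∘ₗ Θ)
    (hΘleft : ∀ u : U,
      Θ u - (1 : T) ⊗ₜ[R] u ∈ LinearMap.range (LinearMap.rTensor U Tplus.subtype))
    (θ : U →ₗ[R] ↥(𝒜 1) ⊗[R] U) (hθ : θ = LinearMap.rTensor U π ∘ₗ Θ) :
    (TensorProduct.leftComm R ↥(𝒜 1) ↥(𝒜 1) U).toLinearMap ∘ₗ tildeComod ρ θ =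
      tildeComod ρ θ := by
  subst hTplus
  have hπ_id (a : 𝒜 1) : π a = a :=
    (hπ a).trans (Subtype.ext (DirectSum.decompose_of_mem_same 𝒜 a.2))
  have hπ_one : π 1 = 0 :=
    (hπ 1).trans (Subtype.ext
      (DirectSum.decompose_of_mem_ne 𝒜 SetLike.GradedOne.one_mem zero_ne_one))
  exact stmt_6_general (𝒜 1) (degreeGE 𝒜 1) (degreeGE_one_eq_adjoin hgen) π hπ_id hπ_one
    (degreeGE_one_mul_self_le_ker hπ) Δ
    (fun a ↦ TensorProduct.range_mapIncl_mono le_rfl (le_degreeGE le_rfl) (hleft a))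
    ρ hρ Θ hΘcoassoc hΘleft θ hθ
end

section
/- Let 𝒜 be an alphabet, let μ : 𝒜 × 𝒜 → R send (A, B) to 1 if A = B and to 0 otherwise, and let W be the free R-module on all words with the pre-Lie comultiplication ρ_μ. Call a word w unlaced if (i) every letter of 𝒜 appears in w either zero times or exactly twice, and (ii) for any distinct letters A, B appearing in w, the word ABAB is not a subword (subsequence) of w. Let U ⊆ W be the free R-submodule generated by the unlaced words (including the empty word). Then ρ_μ(U) ⊆ U ⊗ U. -/
open scoped TensorProduct Classical

/-- The free `R`-module on the set of all words (including the empty word). -/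
abbrev AllWordModule (R 𝒜 : Type*) [CommRing R] : Type _ := List 𝒜 →₀ R

/-- `μ(w(i), w(j))` (0-based positions). -/
def muCoeff {R 𝒜 : Type*} [CommRing R] (μ : 𝒜 → 𝒜 → R) (w : List 𝒜) (i j : ℕ) : R :=
  match w[i]?, w[j]? with
  | some a, some b => μ a b
  | _, _ => 0

/-- Simple inscriptions in a word `w`: pairs of positions `0 ≤ i < j < w.length`. -/
def simpleInscriptions {𝒜 : Type*} (w : List 𝒜) : Finset (ℕ × ℕ) :=
  (Finset.range w.length ×ˢ Finset.range w.length).filter (fun p => p.1 < p.2)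

/-- A word is unlaced if every letter appears in it zero times or exactly twice, and for
any two distinct letters `a, b` appearing in it, `abab` is not a subword (subsequence). -/
def Unlaced {𝒜 : Type*} [DecidableEq 𝒜] (w : List 𝒜) : Prop :=
  (∀ a : 𝒜, w.count a = 0 ∨ w.count a = 2) ∧
    (∀ a b : 𝒜, a ∈ w → b ∈ w → a ≠ b → ¬ [a, b, a, b].Sublist w)

/-!
Cut an unlaced word `w = x a y a z` at the two occurrences of a letter `a`; then `a` occurs in none
of `x`, `y`, `z`. A letter `b` occurring both in `y` and in `x z` would make `baba` (if `b` is in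
`x`) or `abab` (if `b` is in `z`) a subword of `w`, so `y` and `x z` share no letters. Hence the two
occurrences of each letter other than `a` both lie in `y` or both lie in `x z`, and `y` and `x z`
are again unlaced. Since `μ` vanishes off the diagonal, all nonzero terms of `ρ_μ(w)` arise from
such cuts.
-/

section Words

variable {𝒜 : Type*}

theorem take_append_getElem_cons_append_getElem_cons_drop (w : List 𝒜) {i j : ℕ}
    (hij : i < j) (hj : j < w.length) :
    w.take i ++ w[i] :: ((w.drop (i + 1)).take (j - i - 1) ++ w[j] :: w.drop (j + 1)) = w := by
  have tail_eq : w[j] :: w.drop (j + 1) = (w.drop (i + 1)).drop (j - i - 1) := by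
    rw [List.drop_drop, show i + 1 + (j - i - 1) = j by omega, ← List.drop_eq_getElem_cons hj]
  rw [tail_eq, List.take_append_drop, ← List.drop_eq_getElem_cons, List.take_append_drop]

theorem mem_simpleInscriptions {w : List 𝒜} {p : ℕ × ℕ} :
    p ∈ simpleInscriptions w ↔ p.1 < p.2 ∧ p.2 < w.length := by
  simp only [simpleInscriptions, Finset.mem_filter, Finset.mem_product, Finset.mem_range]
  omega

theorem muCoeff_eq_getElem {R : Type*} [CommRing R] (μ : 𝒜 → 𝒜 → R) (w : List 𝒜) {i j : ℕ}
    (hi : i < w.length) (hj : j < w.length) : muCoeff μ w i j = μ w[i] w[j] := by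
  simp [muCoeff, hi, hj]

end Words

namespace Unlaced

variable {𝒜 : Type*} [DecidableEq 𝒜] {v w x y z : List 𝒜} {a : 𝒜}

theorem of_sublist (hw : Unlaced w) (hvw : v.Sublist w)
    (hcount : ∀ a, v.count a = 0 ∨ v.count a = 2) : Unlaced v :=
  ⟨hcount, fun a b ha hb hab habab =>
    hw.2 a b (hvw.subset ha) (hvw.subset hb) hab (habab.trans hvw)⟩

theorem not_abab_sublist (hw : Unlaced w) {a b : 𝒜} (hab : a ≠ b) :
    ¬ [a, b, a, b].Sublist w := fun habab =>
  hw.2 a b (habab.subset (by simp)) (habab.subset (by simp)) hab habab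

theorem notMem_inside (hw : Unlaced (x ++ a :: (y ++ a :: z))) : a ∉ y := by
  have hcount := hw.1 a
  simp only [List.count_append, List.count_cons_self] at hcount
  exact List.count_eq_zero.1 (by omega)

theorem disjoint_inside_outside (hw : Unlaced (x ++ a :: (y ++ a :: z))) :
    y.Disjoint (x ++ z) := by
  intro b hby hbxz
  have hab : a ≠ b := fun h => hw.notMem_inside (h ▸ hby)
  rw [← List.singleton_sublist] at hby
  rcases List.mem_append.1 hbxz with hbx | hbz
  · rw [← List.singleton_sublist] at hbx
    have hbaba : [b, a, b, a].Sublist (x ++ a :: (y ++ a :: z)) :=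
      hbx.append ((hby.append ((List.nil_sublist z).cons_cons a)).cons_cons a)
    exact hw.not_abab_sublist hab.symm hbaba
  · rw [← List.singleton_sublist] at hbz
    have habab : [a, b, a, b].Sublist (x ++ a :: (y ++ a :: z)) :=
      (List.nil_sublist x).append ((hby.append (hbz.cons_cons a)).cons_cons a)
    exact hw.not_abab_sublist hab habab

theorem count_inside_and_count_outside (hw : Unlaced (x ++ a :: (y ++ a :: z))) (b : 𝒜) :
    (y.count b = 0 ∨ y.count b = 2) ∧ ((x ++ z).count b = 0 ∨ (x ++ z).count b = 2) := by
  have zero_or_zero : y.count b = 0 ∨ (x ++ z).count b = 0 := by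
    simp only [List.count_eq_zero]
    exact or_iff_not_imp_left.2 fun hby => hw.disjoint_inside_outside (not_not.1 hby)
  have hcount := hw.1 b
  simp only [List.count_append, List.count_cons] at hcount zero_or_zero ⊢
  split at hcount <;> omega

theorem inside (hw : Unlaced (x ++ a :: (y ++ a :: z))) : Unlaced y :=
  hw.of_sublist (((List.sublist_append_left y _).cons a).trans (List.sublist_append_right x _))
    fun b => (hw.count_inside_and_count_outside b).1

theorem outside (hw : Unlaced (x ++ a :: (y ++ a :: z))) : Unlaced (x ++ z) :=
  hw.of_sublist
    ((List.Sublist.refl x).append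
      (((List.sublist_cons_self a z).trans (List.sublist_append_right y _)).cons a))
    fun b => (hw.count_inside_and_count_outside b).2

theorem inside_and_outside_of_getElem_eq (hw : Unlaced w) {i j : ℕ} (hij : i < j)
    (hj : j < w.length) (hletter : w[i] = w[j]) :
    Unlaced ((w.drop (i + 1)).take (j - i - 1)) ∧ Unlaced (w.take i ++ w.drop (j + 1)) := by
  rw [← take_append_getElem_cons_append_getElem_cons_drop w hij hj, ← hletter] at hw
  exact ⟨hw.inside, hw.outside⟩

end Unlaced

theorem tmul_mem_range_mapIncl_s19 {R M N : Type*} [CommSemiring R] [AddCommMonoid M]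
    [AddCommMonoid N] [Module R M] [Module R N] {p : Submodule R M} {q : Submodule R N}
    {m : M} {n : N} (hm : m ∈ p) (hn : n ∈ q) :
    m ⊗ₜ[R] n ∈ LinearMap.range (TensorProduct.mapIncl p q) :=
  ⟨⟨m, hm⟩ ⊗ₜ[R] ⟨n, hn⟩, TensorProduct.map_tmul ..⟩

/-- The submodule `U` of `W` spanned by the unlaced words. -/
noncomputable def unlacedSubmodule (R 𝒜 : Type*) [CommRing R] [DecidableEq 𝒜] :
    Submodule R (AllWordModule R 𝒜) :=
  Submodule.span R {x | ∃ w : List 𝒜, Unlaced w ∧ x = Finsupp.single w 1}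

theorem Unlaced.single_mem_unlacedSubmodule (R : Type*) {𝒜 : Type*} [CommRing R] [DecidableEq 𝒜]
    {w : List 𝒜} (hw : Unlaced w) : Finsupp.single w 1 ∈ unlacedSubmodule R 𝒜 :=
  Submodule.subset_span ⟨w, hw, rfl⟩

theorem stmt_19_general {R 𝒜 : Type*} [CommRing R] [DecidableEq 𝒜]
    (μ : 𝒜 → 𝒜 → R) (hμ : ∀ a b : 𝒜, a ≠ b → μ a b = 0)
    (ρ : AllWordModule R 𝒜 →ₗ[R] AllWordModule R 𝒜 ⊗[R] AllWordModule R 𝒜)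
    (hρ : ∀ w : List 𝒜,
      ρ (Finsupp.single w 1) =
        ∑ p ∈ simpleInscriptions w,
          muCoeff μ w p.1 p.2 •
            (Finsupp.single ((w.drop (p.1 + 1)).take (p.2 - p.1 - 1)) (1 : R) ⊗ₜ[R]
              Finsupp.single (w.take p.1 ++ w.drop (p.2 + 1)) (1 : R))) :
    unlacedSubmodule R 𝒜 ≤ (LinearMap.range
      (TensorProduct.mapIncl (unlacedSubmodule R 𝒜) (unlacedSubmodule R 𝒜))).comap ρ := by
  refine Submodule.span_le.2 ?_
  rintro _ ⟨w, hw, rfl⟩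
  rw [SetLike.mem_coe, Submodule.mem_comap, hρ]
  refine Submodule.sum_mem _ fun p hp => ?_
  obtain ⟨hij, hj⟩ := mem_simpleInscriptions.1 hp
  by_cases hletter : w[p.1] = w[p.2]
  · obtain ⟨hinside, houtside⟩ := hw.inside_and_outside_of_getElem_eq hij hj hletter
    exact Submodule.smul_mem _ _ (tmul_mem_range_mapIncl_s19
      (hinside.single_mem_unlacedSubmodule R) (houtside.single_mem_unlacedSubmodule R))
  · rw [muCoeff_eq_getElem μ w (hij.trans hj) hj, hμ _ _ hletter, zero_smul]
    exact Submodule.zero_mem _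

/-- for `μ(A,B) = δ_{A,B}`, the span `U` of unlaced words satisfies
`ρ_μ(U) ⊆ U ⊗ U`. -/
theorem stmt_19 {R 𝒜 : Type*} [CommRing R] [DecidableEq 𝒜]
    (μ : 𝒜 → 𝒜 → R) (hμ : ∀ a b : 𝒜, μ a b = if a = b then 1 else 0)
    (ρ : AllWordModule R 𝒜 →ₗ[R] AllWordModule R 𝒜 ⊗[R] AllWordModule R 𝒜)
    (hρ : ∀ w : List 𝒜,
      ρ (Finsupp.single w 1) =
        ∑ p ∈ simpleInscriptions w,
          muCoeff μ w p.1 p.2 •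
            (Finsupp.single ((w.drop (p.1 + 1)).take (p.2 - p.1 - 1)) (1 : R) ⊗ₜ[R]
              Finsupp.single (w.take p.1 ++ w.drop (p.2 + 1)) (1 : R)))
    (U : Submodule R (AllWordModule R 𝒜))
    (hU : U = Submodule.span R
      {x : AllWordModule R 𝒜 | ∃ w : List 𝒜, Unlaced w ∧ x = Finsupp.single w 1}) :
    ∀ x ∈ U, ρ x ∈ LinearMap.range (TensorProduct.map U.subtype U.subtype) := by
  subst hU
  exact fun _ hx => stmt_19_general μ (fun a b hab => by rw [hμ, if_neg hab]) ρ hρ hx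
end
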